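/- Let ρ ≥ 0. There exists a constant C > 0 (depending only on ρ) such that for all s, t with 0 ≤ s < t and all x, x̄ ∈ [0,1], ∫ₛᵗ ∫₀¹ (H_{t−θ}(x,r) − H_{t−θ}(x̄,r))² · (θ − s)^{−1/2} dr dθ ≤ C · |x − x̄|² / √(t − s). -/

import Mathlib

open Real MeasureTheory

/-- The Green's function of `-∂_x⁴ + ρ∂_x²` on `[0,1]` with Neumann boundary conditions:
`H_t(x,y) = 1 + 2 ∑_{k=1}^∞ e^{-(k⁴π⁴ + ρk²π²)t} cos(kπx) cos(kπy)`. -/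
noncomputable def Hker (ρ t x y : ℝ) : ℝ :=
  1 + 2 * ∑' k : ℕ,
      Real.exp (-(((k + 1 : ℝ) ^ 4 * π ^ 4 + ρ * (k + 1 : ℝ) ^ 2 * π ^ 2) * t)) *
        Real.cos ((k + 1 : ℝ) * π * x) * Real.cos ((k + 1 : ℝ) * π * y)

/-!
Write `λₖ = k⁴π⁴ + ρk²π²`. Parseval in `r` turns the inner integral into
`2 ∑ₖ (cos kπx - cos kπx')² e^{-2λₖ(t-θ)}`. Against a weight `(θ - s)^{-α}` with `0 ≤ α < 1` the
`k`-th exponential integrates to `O(1 / (λₖ (t - s)^α))`: on the half of `[s, t]` near `t` the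
weight is `O((t - s)^{-α})` and the exponential has mass at most `1 / (2λₖ)`, while on the other
half the exponential is `O(1 / (λₖ (t - s)))` and the weight has mass `O((t - s)^{1-α})`. Since
`(cos kπx - cos kπx')² ≤ k²π²|x - x'|²` and `λₖ` grows like `k⁴` as soon as `-π² < ρ`, what remains
is the convergent sum `∑ₖ k⁻²`.
-/

lemma norm_mul_le_abs_of_abs_le_one {a b : ℝ} (hb : |b| ≤ 1) : ‖a * b‖ ≤ |a| := by
  rw [norm_eq_abs, abs_mul]
  exact mul_le_of_le_one_right (abs_nonneg a) hb

section Series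

variable {ι X : Type*} [Countable ι] [MeasurableSpace X] {μ : Measure X}

lemma integral_tsum_le_tsum_of_integral_le {F : ι → X → ℝ} {b : ι → ℝ}
    (hF : ∀ k, Integrable (F k) μ) (hF_nonneg : ∀ k, 0 ≤ᵐ[μ] F k)
    (hFb : ∀ k, ∫ x, F k x ∂μ ≤ b k) (hb : Summable b) :
    ∫ x, ∑' k, F k x ∂μ ≤ ∑' k, b k := by
  have integral_norm_eq : ∀ k, ∫ x, ‖F k x‖ ∂μ = ∫ x, F k x ∂μ := fun k =>
    integral_congr_ae <| (hF_nonneg k).mono fun _ hx => norm_of_nonneg hx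
  have summable_integral_norm : Summable fun k => ∫ x, ‖F k x‖ ∂μ :=
    hb.of_nonneg_of_le (fun k => integral_nonneg fun _ => norm_nonneg _)
      fun k => (integral_norm_eq k).trans_le (hFb k)
  have hasSum_integral := hasSum_integral_of_summable_integral_norm hF summable_integral_norm
  rw [← hasSum_integral.tsum_eq]
  exact hasSum_integral.summable.tsum_le_tsum hFb hb

variable {e : ι → X → ℝ} {c : ι → ℝ}

lemma hasSum_integral_tsum_mul (he : ∀ k, AEStronglyMeasurable (e k) μ)
    (he_le : ∀ k x, |e k x| ≤ 1) (hc : Summable fun k => |c k|) {g : X → ℝ}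
    (hg : Integrable g μ) :
    HasSum (fun k => c k * ∫ x, e k x * g x ∂μ) (∫ x, (∑' k, c k * e k x) * g x ∂μ) := by
  have integrable_term : ∀ k, Integrable (fun x => c k * e k x * g x) μ := fun k =>
    hg.bdd_mul (c := |c k|) ((he k).const_mul _)
      (.of_forall fun x => norm_mul_le_abs_of_abs_le_one (he_le k x))
  have integral_norm_le : ∀ k, ∫ x, ‖c k * e k x * g x‖ ∂μ ≤ |c k| * ∫ x, ‖g x‖ ∂μ := by
    intro k
    rw [← integral_const_mul]
    refine integral_mono (integrable_term k).norm (hg.norm.const_mul _) fun x => ?_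
    simp only [norm_mul _ (g x)]
    gcongr
    exact norm_mul_le_abs_of_abs_le_one (he_le k x)
  have summable_integral_norm : Summable fun k => ∫ x, ‖c k * e k x * g x‖ ∂μ :=
    (hc.mul_right _).of_nonneg_of_le (fun k => integral_nonneg fun _ => norm_nonneg _)
      integral_norm_le
  simpa only [mul_assoc, integral_const_mul, ← tsum_mul_right] using
    hasSum_integral_of_summable_integral_norm integrable_term summable_integral_norm

lemma hasSum_integral_sq_tsum_of_orthogonal [TopologicalSpace X]
    [OpensMeasurableSpace X] [IsFiniteMeasure μ] (he : ∀ k, Continuous (e k))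
    (he_le : ∀ k x, |e k x| ≤ 1) (horth : Pairwise fun j k => ∫ x, e j x * e k x ∂μ = 0)
    (hc : Summable fun k => |c k|) :
    HasSum (fun k => c k ^ 2 * ∫ x, e k x ^ 2 ∂μ) (∫ x, (∑' k, c k * e k x) ^ 2 ∂μ) := by
  set f : X → ℝ := fun x => ∑' k, c k * e k x with hf
  have term_le : ∀ k x, ‖c k * e k x‖ ≤ |c k| := fun k x =>
    norm_mul_le_abs_of_abs_le_one (he_le k x)
  have continuous_f : Continuous f := continuous_tsum (fun k => by fun_prop) hc term_le
  have integrable_f : Integrable f μ :=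
    .of_bound continuous_f.aestronglyMeasurable (∑' k, |c k|)
      (.of_forall fun x => tsum_of_norm_bounded hc.hasSum (term_le · x))
  have measurable_e : ∀ k, AEStronglyMeasurable (e k) μ := fun k => (he k).aestronglyMeasurable
  have integrable_e : ∀ k, Integrable (e k) μ := fun k =>
    .of_bound (measurable_e k) 1 (.of_forall (he_le k))
  have coefficient : ∀ k, ∫ x, e k x * f x ∂μ = c k * ∫ x, e k x ^ 2 ∂μ := by
    intro k
    have hsum := hasSum_integral_tsum_mul measurable_e he_le hc (integrable_e k)
    have hsingle := hasSum_single (f := fun j => c j * ∫ x, e j x * e k x ∂μ) k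
      fun j hj => by rw [horth hj, mul_zero]
    simpa only [hf, mul_comm (e k _), sq] using hsum.unique hsingle
  convert hasSum_integral_tsum_mul measurable_e he_le hc integrable_f using 2 with k
  · rw [coefficient]; ring
  · simp only [hf, sq]

end Series

section WeightedExponential

variable {a T α : ℝ}

lemma exp_neg_le_inv {u : ℝ} (hu : 0 < u) : exp (-u) ≤ u⁻¹ := by
  rw [exp_neg]
  exact inv_anti₀ hu (by linarith [add_one_le_exp u])

lemma integral_exp_neg_mul_sub_le (ha : 0 < a) (T : ℝ) :
    ∫ u in (0 : ℝ)..T, exp (-(a * (T - u))) ≤ a⁻¹ := by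
  have integral_eq : ∫ u in (0 : ℝ)..T, exp (-(a * (T - u))) = a⁻¹ * (1 - exp (-(a * T))) := by
    have := intervalIntegral.integral_comp_mul_sub exp ha.ne' (a * T) (a := 0) (b := T)
    simpa [mul_sub] using this
  rw [integral_eq]
  exact mul_le_of_le_one_right (by positivity) (by linarith [exp_pos (-(a * T))])

lemma integral_rpow_neg (hα : α < 1) (T : ℝ) :
    ∫ u in (0 : ℝ)..T, u ^ (-α) = T ^ (1 - α) / (1 - α) := by
  rw [integral_rpow (Or.inl (by linarith)), neg_add_eq_sub,
    zero_rpow (sub_pos.2 hα).ne', sub_zero]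

lemma exp_neg_mul_rpow_neg_le (ha : 0 < a) (hT : 0 < T) (hα : 0 ≤ α) {u : ℝ} (hu : 0 ≤ u) :
    exp (-(a * (T - u))) * u ^ (-α) ≤
      exp (-(a * (T - u))) * (T / 2) ^ (-α) + 2 / (a * T) * u ^ (-α) := by
  rcases le_total (T / 2) u with late | early
  · have weight_le : u ^ (-α) ≤ (T / 2) ^ (-α) :=
      rpow_le_rpow_of_nonpos (by positivity) late (by linarith)
    have : 0 ≤ 2 / (a * T) * u ^ (-α) := by positivity
    linarith [mul_le_mul_of_nonneg_left weight_le (exp_pos (-(a * (T - u)))).le]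
  · have exp_le : exp (-(a * (T - u))) ≤ 2 / (a * T) :=
      calc exp (-(a * (T - u))) ≤ exp (-(a * (T / 2))) := by gcongr; linarith
        _ ≤ (a * (T / 2))⁻¹ := exp_neg_le_inv (by positivity)
        _ = 2 / (a * T) := by field_simp
    have : 0 ≤ exp (-(a * (T - u))) * (T / 2) ^ (-α) := by positivity
    linarith [mul_le_mul_of_nonneg_right exp_le (rpow_nonneg hu (-α))]

lemma intervalIntegrable_exp_neg_mul_rpow_neg (hα : α < 1) (a T : ℝ) :
    IntervalIntegrable (fun u => exp (-(a * (T - u))) * u ^ (-α)) volume 0 T :=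
  (intervalIntegral.intervalIntegrable_rpow' (by linarith)).continuousOn_mul (by fun_prop)

lemma integral_exp_neg_mul_rpow_neg_le (ha : 0 < a) (hT : 0 < T) (hα₀ : 0 ≤ α) (hα₁ : α < 1) :
    ∫ u in (0 : ℝ)..T, exp (-(a * (T - u))) * u ^ (-α) ≤
      (2 ^ α + 2 / (1 - α)) / (a * T ^ α) := by
  have integrable_late :
      IntervalIntegrable (fun u => exp (-(a * (T - u))) * (T / 2) ^ (-α)) volume 0 T :=
    Continuous.intervalIntegrable (by fun_prop) _ _
  have integrable_early :
      IntervalIntegrable (fun u => 2 / (a * T) * u ^ (-α)) volume 0 T :=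
    (intervalIntegral.intervalIntegrable_rpow' (by linarith)).const_mul _
  calc ∫ u in (0 : ℝ)..T, exp (-(a * (T - u))) * u ^ (-α)
      ≤ ∫ u in (0 : ℝ)..T, (exp (-(a * (T - u))) * (T / 2) ^ (-α) + 2 / (a * T) * u ^ (-α)) :=
        intervalIntegral.integral_mono_on hT.le
          (intervalIntegrable_exp_neg_mul_rpow_neg hα₁ a T)
          (integrable_late.add integrable_early)
          fun u hu => exp_neg_mul_rpow_neg_le ha hT hα₀ hu.1
    _ = (∫ u in (0 : ℝ)..T, exp (-(a * (T - u)))) * (T / 2) ^ (-α) +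
          2 / (a * T) * (T ^ (1 - α) / (1 - α)) := by
        rw [intervalIntegral.integral_add integrable_late integrable_early,
          intervalIntegral.integral_mul_const, intervalIntegral.integral_const_mul,
          integral_rpow_neg hα₁]
    _ ≤ a⁻¹ * (T / 2) ^ (-α) + 2 / (a * T) * (T ^ (1 - α) / (1 - α)) := by
        gcongr
        exact integral_exp_neg_mul_sub_le ha T
    _ = (2 ^ α + 2 / (1 - α)) / (a * T ^ α) := by
        have : 1 - α ≠ 0 := (sub_pos.2 hα₁).ne'
        rw [rpow_neg (by positivity), div_rpow hT.le zero_le_two, rpow_sub hT, rpow_one]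
        field_simp

end WeightedExponential

section NeumannModes

/-- The non-constant Neumann eigenfunction `cos(nπx)` of the Laplacian on `[0,1]`, with `n = k + 1`
as in the series defining `Hker`. -/
noncomputable def neumannMode (k : ℕ) (x : ℝ) : ℝ := cos ((k + 1 : ℝ) * π * x)

lemma continuous_neumannMode (k : ℕ) : Continuous (neumannMode k) := by
  unfold neumannMode; fun_prop

lemma abs_neumannMode_le_one (k : ℕ) (x : ℝ) : |neumannMode k x| ≤ 1 := abs_cos_le_one _

lemma sq_neumannMode_sub_le (k : ℕ) (x x' : ℝ) :
    (neumannMode k x - neumannMode k x') ^ 2 ≤ ((k + 1 : ℝ) * π) ^ 2 * |x - x'| ^ 2 := by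
  rw [sq_abs, ← mul_pow, mul_sub]
  exact sq_le_sq.2 (abs_cos_sub_cos_le _ _)

lemma integral_cos_int_mul_pi (n : ℤ) :
    ∫ r in (0 : ℝ)..1, cos (n * π * r) = if n = 0 then 1 else 0 := by
  split_ifs with hn
  · simp [hn]
  · have : (n : ℝ) * π ≠ 0 := mul_ne_zero (mod_cast hn) pi_ne_zero
    simp [intervalIntegral.integral_comp_mul_left cos this, sin_int_mul_pi]

lemma neumannMode_mul_neumannMode (j k : ℕ) (r : ℝ) :
    neumannMode j r * neumannMode k r =
      (cos (((j - k : ℤ) : ℝ) * π * r) + cos (((j + k + 2 : ℤ) : ℝ) * π * r)) / 2 := by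
  rw [eq_div_iff two_ne_zero, mul_comm, ← mul_assoc, neumannMode, neumannMode,
    two_mul_cos_mul_cos]
  push_cast
  ring_nf

lemma integral_neumannMode_mul_neumannMode (j k : ℕ) :
    ∫ r in (0 : ℝ)..1, neumannMode j r * neumannMode k r = if j = k then 1 / 2 else 0 := by
  have intervalIntegrable_cos (n : ℤ) :
      IntervalIntegrable (fun r : ℝ => cos (n * π * r)) volume 0 1 :=
    Continuous.intervalIntegrable (by fun_prop) _ _
  simp only [neumannMode_mul_neumannMode, intervalIntegral.integral_div]
  rw [intervalIntegral.integral_add (intervalIntegrable_cos _) (intervalIntegrable_cos _),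
    integral_cos_int_mul_pi, integral_cos_int_mul_pi, if_neg (by lia : (j + k + 2 : ℤ) ≠ 0)]
  simp [sub_eq_zero, ite_div]

lemma hasSum_integral_sq_tsum_neumannMode {c : ℕ → ℝ} (hc : Summable fun k => |c k|) :
    HasSum (fun k => c k ^ 2 / 2) (∫ r in (0 : ℝ)..1, (∑' k, c k * neumannMode k r) ^ 2) := by
  have orthogonality := integral_neumannMode_mul_neumannMode
  simp only [intervalIntegral.integral_of_le zero_le_one] at orthogonality ⊢
  simpa [sq, orthogonality, div_eq_mul_inv] using
    hasSum_integral_sq_tsum_of_orthogonal (μ := volume.restrict (Set.Ioc 0 1))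
      continuous_neumannMode abs_neumannMode_le_one
      (fun j k hjk => (orthogonality j k).trans (if_neg hjk)) hc

end NeumannModes

section Kernel

variable {ρ : ℝ}

/-- The eigenvalue of `∂_x⁴ - ρ∂_x²` belonging to `neumannMode k`. -/
noncomputable def neumannEigenvalue (ρ : ℝ) (k : ℕ) : ℝ :=
  (k + 1 : ℝ) ^ 4 * π ^ 4 + ρ * (k + 1 : ℝ) ^ 2 * π ^ 2

/-- The infimum over `n ≥ 1` of `(n⁴π⁴ + ρn²π²) / n⁴`, which measures the quartic growth of
`neumannEigenvalue ρ`. It is attained at `n = 1` if `ρ ≤ 0` and approached as `n → ∞` if `0 ≤ ρ`. -/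
noncomputable def neumannCoercivity (ρ : ℝ) : ℝ := π ^ 2 * min (π ^ 2) (π ^ 2 + ρ)

lemma neumannCoercivity_pos (hρ : -π ^ 2 < ρ) : 0 < neumannCoercivity ρ :=
  mul_pos (by positivity) (lt_min (by positivity) (by linarith))

lemma neumannCoercivity_mul_le_neumannEigenvalue (ρ : ℝ) (k : ℕ) :
    neumannCoercivity ρ * (k + 1 : ℝ) ^ 4 ≤ neumannEigenvalue ρ k := by
  have one_le_sq : 1 ≤ (k + 1 : ℝ) ^ 2 := one_le_pow₀ (by simp)
  have min_mul_le : min (π ^ 2) (π ^ 2 + ρ) * (k + 1 : ℝ) ^ 2 ≤ (k + 1 : ℝ) ^ 2 * π ^ 2 + ρ := by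
    rcases le_total 0 ρ with hρ | hρ
    · rw [min_eq_left (by linarith)]; linarith
    · rw [min_eq_right (by linarith)]
      linarith [mul_le_mul_of_nonpos_left one_le_sq hρ]
  calc neumannCoercivity ρ * (k + 1 : ℝ) ^ 4
      = (k + 1 : ℝ) ^ 2 * π ^ 2 * (min (π ^ 2) (π ^ 2 + ρ) * (k + 1 : ℝ) ^ 2) := by
        rw [neumannCoercivity]; ring
    _ ≤ (k + 1 : ℝ) ^ 2 * π ^ 2 * ((k + 1 : ℝ) ^ 2 * π ^ 2 + ρ) := by gcongr
    _ = neumannEigenvalue ρ k := by rw [neumannEigenvalue]; ring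

lemma neumannEigenvalue_pos (hρ : -π ^ 2 < ρ) (k : ℕ) : 0 < neumannEigenvalue ρ k :=
  (mul_pos (neumannCoercivity_pos hρ) (by positivity)).trans_le
    (neumannCoercivity_mul_le_neumannEigenvalue ρ k)

lemma hasSum_inv_nat_succ_sq : HasSum (fun k : ℕ => ((k + 1 : ℝ) ^ 2)⁻¹) (π ^ 2 / 6) := by
  simpa using (hasSum_nat_add_iff' 1).2 hasSum_zeta_two

lemma summable_exp_neg_neumannEigenvalue_mul (hρ : -π ^ 2 < ρ) {τ : ℝ} (hτ : 0 < τ) :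
    Summable fun k => exp (-(neumannEigenvalue ρ k * τ)) := by
  have coercivity_pos := neumannCoercivity_pos hρ
  refine (hasSum_inv_nat_succ_sq.summable.mul_left (neumannCoercivity ρ * τ)⁻¹).of_nonneg_of_le
    (fun k => (exp_pos _).le) fun k => ?_
  calc exp (-(neumannEigenvalue ρ k * τ))
      ≤ (neumannEigenvalue ρ k * τ)⁻¹ :=
        exp_neg_le_inv (mul_pos (neumannEigenvalue_pos hρ k) hτ)
    _ ≤ (neumannCoercivity ρ * (k + 1 : ℝ) ^ 2 * τ)⁻¹ := by
        have growth : neumannCoercivity ρ * (k + 1 : ℝ) ^ 2 ≤ neumannEigenvalue ρ k :=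
          le_trans (by gcongr <;> simp) (neumannCoercivity_mul_le_neumannEigenvalue ρ k)
        gcongr
    _ = (neumannCoercivity ρ * τ)⁻¹ * ((k + 1 : ℝ) ^ 2)⁻¹ := by
        rw [mul_right_comm, mul_inv]

lemma Hker_eq_tsum_neumannMode (ρ t x y : ℝ) :
    Hker ρ t x y =
      1 + 2 * ∑' k, exp (-(neumannEigenvalue ρ k * t)) * neumannMode k x * neumannMode k y :=
  rfl

lemma hasSum_integral_sq_Hker_sub (hρ : -π ^ 2 < ρ) {τ : ℝ} (hτ : 0 < τ) (x x' : ℝ) :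
    HasSum
      (fun k => 2 * (neumannMode k x - neumannMode k x') ^ 2 *
        exp (-(2 * neumannEigenvalue ρ k * τ)))
      (∫ r in (0 : ℝ)..1, (Hker ρ τ x r - Hker ρ τ x' r) ^ 2) := by
  set E : ℕ → ℝ := fun k => exp (-(neumannEigenvalue ρ k * τ)) with hE
  have summable_coeff (y : ℝ) : Summable fun k => ‖E k * neumannMode k y‖ :=
    (summable_exp_neg_neumannEigenvalue_mul hρ hτ).of_nonneg_of_le (fun _ => norm_nonneg _)
      fun k => (norm_mul_le_abs_of_abs_le_one (abs_neumannMode_le_one k y)).trans_eq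
        (abs_of_pos (exp_pos _))
  have summable_series (y r : ℝ) : Summable fun k => E k * neumannMode k y * neumannMode k r :=
    (summable_coeff y).of_norm_bounded fun k =>
      norm_mul_le_abs_of_abs_le_one (abs_neumannMode_le_one k r)
  set c : ℕ → ℝ := fun k => E k * neumannMode k x - E k * neumannMode k x' with hc
  have summable_c : Summable fun k => |c k| :=
    ((summable_coeff x).add (summable_coeff x')).of_nonneg_of_le (fun _ => abs_nonneg _)
      fun k => abs_sub _ _
  have increment_eq (r : ℝ) :
      Hker ρ τ x r - Hker ρ τ x' r = 2 * ∑' k, c k * neumannMode k r := by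
    simp only [Hker_eq_tsum_neumannMode, hc, sub_mul]
    rw [(summable_series x r).tsum_sub (summable_series x' r)]
    ring
  have term_eq (k : ℕ) : 2 * (neumannMode k x - neumannMode k x') ^ 2 *
      exp (-(2 * neumannEigenvalue ρ k * τ)) = 2 ^ 2 * (c k ^ 2 / 2) := by
    have exp_double : exp (-(2 * neumannEigenvalue ρ k * τ)) = E k ^ 2 := by
      rw [hE, ← exp_nat_mul]
      push_cast
      ring_nf
    rw [exp_double, hc]
    ring
  simp only [term_eq, increment_eq, mul_pow, intervalIntegral.integral_const_mul]
  exact (hasSum_integral_sq_tsum_neumannMode summable_c).mul_left (2 ^ 2)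

lemma integral_neumannMode_increment_mul_exp_le (hρ : -π ^ 2 < ρ) {α T : ℝ} (hα₀ : 0 ≤ α)
    (hα₁ : α < 1) (hT : 0 < T) (x x' : ℝ) (k : ℕ) :
    ∫ u in (0 : ℝ)..T, 2 * (neumannMode k x - neumannMode k x') ^ 2 *
        (exp (-(2 * neumannEigenvalue ρ k * (T - u))) * u ^ (-α)) ≤
      (2 ^ α + 2 / (1 - α)) * π ^ 2 / neumannCoercivity ρ * |x - x'| ^ 2 / T ^ α *
        ((k + 1 : ℝ) ^ 2)⁻¹ := by
  have coercivity_pos := neumannCoercivity_pos hρ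
  have eigenvalue_pos := neumannEigenvalue_pos hρ k
  have one_sub_pos : 0 < 1 - α := sub_pos.2 hα₁
  rw [intervalIntegral.integral_const_mul]
  calc _ ≤ 2 * (neumannMode k x - neumannMode k x') ^ 2 *
          ((2 ^ α + 2 / (1 - α)) / (2 * neumannEigenvalue ρ k * T ^ α)) := by
        gcongr
        exact integral_exp_neg_mul_rpow_neg_le (by positivity) hT hα₀ hα₁
    _ ≤ 2 * (((k + 1 : ℝ) * π) ^ 2 * |x - x'| ^ 2) *
          ((2 ^ α + 2 / (1 - α)) / (2 * (neumannCoercivity ρ * (k + 1 : ℝ) ^ 4) * T ^ α)) := by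
        gcongr
        · exact sq_neumannMode_sub_le k x x'
        · exact neumannCoercivity_mul_le_neumannEigenvalue ρ k
    _ = _ := by field_simp

lemma integral_integral_sq_Hker_sub_mul_rpow_le (hρ : -π ^ 2 < ρ) {α T : ℝ} (hα₀ : 0 ≤ α)
    (hα₁ : α < 1) (hT : 0 < T) (x x' : ℝ) :
    ∫ u in (0 : ℝ)..T, (∫ r in (0 : ℝ)..1, (Hker ρ (T - u) x r - Hker ρ (T - u) x' r) ^ 2) *
        u ^ (-α) ≤
      (2 ^ α + 2 / (1 - α)) * π ^ 4 / (6 * neumannCoercivity ρ) * |x - x'| ^ 2 / T ^ α := by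
  set F : ℕ → ℝ → ℝ := fun k u => 2 * (neumannMode k x - neumannMode k x') ^ 2 *
    (exp (-(2 * neumannEigenvalue ρ k * (T - u))) * u ^ (-α)) with hF
  have integral_eq :
      ∫ u in (0 : ℝ)..T, (∫ r in (0 : ℝ)..1, (Hker ρ (T - u) x r - Hker ρ (T - u) x' r) ^ 2) *
        u ^ (-α) = ∫ u in Set.Ioc 0 T, ∑' k, F k u := by
    -- The expansion fails at the endpoint `u = T`, where `Hker ρ 0` is a divergent series.
    rw [intervalIntegral.integral_of_le hT.le, integral_Ioc_eq_integral_Ioo,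
      integral_Ioc_eq_integral_Ioo]
    refine setIntegral_congr_fun measurableSet_Ioo fun u hu => ?_
    have expansion := (hasSum_integral_sq_Hker_sub hρ (sub_pos.2 hu.2) x x').mul_right (u ^ (-α))
    simp only [hF, ← mul_assoc, expansion.tsum_eq]
  have integrable_F (k : ℕ) : IntegrableOn (F k) (Set.Ioc 0 T) :=
    (intervalIntegrable_iff_integrableOn_Ioc_of_le hT.le).1
      ((intervalIntegrable_exp_neg_mul_rpow_neg hα₁ _ T).const_mul _)
  have F_nonneg (k : ℕ) : 0 ≤ᵐ[volume.restrict (Set.Ioc 0 T)] F k :=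
    ae_restrict_of_forall_mem measurableSet_Ioc fun u hu =>
      mul_nonneg (by positivity) (mul_nonneg (exp_pos _).le (rpow_nonneg hu.1.le _))
  have integral_F_le (k : ℕ) := integral_neumannMode_increment_mul_exp_le hρ hα₀ hα₁ hT x x' k
  simp only [intervalIntegral.integral_of_le hT.le] at integral_F_le
  have hasSum_bound := hasSum_inv_nat_succ_sq.mul_left
    ((2 ^ α + 2 / (1 - α)) * π ^ 2 / neumannCoercivity ρ * |x - x'| ^ 2 / T ^ α)
  calc _ = ∫ u in Set.Ioc 0 T, ∑' k, F k u := integral_eq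
    _ ≤ _ := integral_tsum_le_tsum_of_integral_le integrable_F F_nonneg integral_F_le
          hasSum_bound.summable
    _ = (2 ^ α + 2 / (1 - α)) * π ^ 4 / (6 * neumannCoercivity ρ) * |x - x'| ^ 2 / T ^ α := by
        rw [hasSum_bound.tsum_eq]
        ring

end Kernel

theorem fourth_order_kernel_weighted_space_increment_general {ρ α s t : ℝ} (hρ : -π ^ 2 < ρ)
    (hα₀ : 0 ≤ α) (hα₁ : α < 1) (hst : s < t) (x x' : ℝ) :
    ∫ θ in s..t, ∫ r in (0 : ℝ)..1,
        (Hker ρ (t - θ) x r - Hker ρ (t - θ) x' r) ^ 2 * (θ - s) ^ (-α) ≤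
      (2 ^ α + 2 / (1 - α)) * π ^ 4 / (6 * neumannCoercivity ρ) * |x - x'| ^ 2 / (t - s) ^ α := by
  have shift := intervalIntegral.integral_comp_sub_right (a := s) (b := t) (fun u =>
    (∫ r in (0 : ℝ)..1, (Hker ρ (t - s - u) x r - Hker ρ (t - s - u) x' r) ^ 2) * u ^ (-α)) s
  simp only [sub_sub_sub_cancel_right, sub_self] at shift
  simp only [intervalIntegral.integral_mul_const, shift]
  exact integral_integral_sq_Hker_sub_mul_rpow_le hρ hα₀ hα₁ (sub_pos.2 hst) x x'

theorem fourth_order_kernel_weighted_space_increment (ρ : ℝ) (hρ : 0 ≤ ρ) :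
    ∃ C : ℝ, 0 < C ∧ ∀ s t x x' : ℝ, 0 ≤ s → s < t →
      x ∈ Set.Icc (0 : ℝ) 1 → x' ∈ Set.Icc (0 : ℝ) 1 →
      (∫ θ in s..t, ∫ r in (0 : ℝ)..1,
          (Hker ρ (t - θ) x r - Hker ρ (t - θ) x' r) ^ 2 * (θ - s) ^ (-(1/2) : ℝ)) ≤
        C * |x - x'| ^ 2 / Real.sqrt (t - s) := by
  have hρ' : -π ^ 2 < ρ := (neg_lt_zero.2 (by positivity)).trans_le hρ
  have coercivity_pos := neumannCoercivity_pos hρ'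
  refine ⟨(2 ^ (1 / 2 : ℝ) + 2 / (1 - 1 / 2)) * π ^ 4 / (6 * neumannCoercivity ρ),
    by norm_num; positivity, fun s t x x' _ hst _ _ => ?_⟩
  rw [sqrt_eq_rpow]
  exact fourth_order_kernel_weighted_space_increment_general hρ' (by norm_num) (by norm_num)
    hst x x'
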